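/- arXiv:0903.4508 — 3 statements merged into one kernel-verified Lean document; each statement's English description precedes it below -/
import Mathlib

section
/- With the uniform initial qubit φ^U on the tree and the half-line walk with s = +1, the distance distribution of the tree walk equals the position distribution of the half-line walk: for all t ≥ 0 and x ∈ ℤ₊, Σ_{g reduced word, |g| = x} Σ_{j=0}^{κ−1} |α_t(g, j)|² = P(X_t = x). -/
noncomputable section

/-- Left multiplication of a reduced word by a letter:
`j · g` removes the first letter if it equals `j`, otherwise prepends `j`. -/
def lmul (j : ℕ) (g : List ℕ) : List ℕ :=
  match g with
  | [] => [j]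
  | k :: rest => if k = j then rest else j :: k :: rest

/-- `g` is a reduced word over the alphabet `{0, …, κ-1}`:
all letters are `< κ` and no two consecutive letters are equal. -/
def WordReduced (κ : ℕ) (g : List ℕ) : Prop :=
  (∀ l ∈ g, l < κ) ∧ g.Chain' (· ≠ ·)

/-- Grover-walk amplitudes on the Cayley tree with initial qubit `φ`:
`alpha κ φ 0 g j = φ j` if `g = e` and `0` otherwise, and
`alpha κ φ (t+1) g j = ∑_{k<κ} (2/κ - δ_{jk}) · alpha κ φ t (j·g) k`. -/
noncomputable def alpha (κ : ℕ) (φ : ℕ → ℂ) : ℕ → List ℕ → ℕ → ℂ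
  | 0, g, j => if g = [] then φ j else 0
  | t + 1, g, j =>
      ∑ k ∈ Finset.range κ, ((2 / (κ : ℂ)) - (if j = k then 1 else 0)) * alpha κ φ t (lmul j g) k

/-- The uniform initial qubit `φ^U(j) = 1/√κ`. -/
noncomputable def phiU (κ : ℕ) : ℕ → ℂ := fun _ => ((1 / Real.sqrt κ : ℝ) : ℂ)

/-- Half-line quantum walk `Ψ_t(x) = (Ψ_t^L(x), Ψ_t^R(x))` with a reflecting wall at the
origin, coin parameters `a`, `b` and wall sign `s`:
`Ψ_0(0) = (1,0)`, `Ψ_0(x) = (0,0)` for `x ≥ 1`, and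
`Ψ_{t+1}^L(x) = a·Ψ_t^L(x+1) − b·Ψ_t^R(x+1)`,
`Ψ_{t+1}^R(x) = b·Ψ_t^L(x−1) + a·Ψ_t^R(x−1)` for `x ≥ 2`,
`Ψ_{t+1}^R(1) = s·Ψ_t^L(0)`, `Ψ_{t+1}^R(0) = 0`. -/
noncomputable def psi (a b s : ℝ) : ℕ → ℕ → ℂ × ℂ
  | 0, x => if x = 0 then (1, 0) else (0, 0)
  | t + 1, x =>
      ((a : ℂ) * (psi a b s t (x + 1)).1 - (b : ℂ) * (psi a b s t (x + 1)).2,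
       if x = 0 then 0
       else if x = 1 then (s : ℂ) * (psi a b s t 0).1
       else (b : ℂ) * (psi a b s t (x - 1)).1 + (a : ℂ) * (psi a b s t (x - 1)).2)

/-- Position distribution `P(X_t = x) = |Ψ_t^L(x)|² + |Ψ_t^R(x)|²`. -/
noncomputable def prob (a b s : ℝ) (t x : ℕ) : ℝ :=
  ‖(psi a b s t x).1‖ ^ 2 + ‖(psi a b s t x).2‖ ^ 2

/-!
A constant initial qubit is invariant under all permutations of the letters, so the amplitude
`α_t(g, j)` depends only on `|g|` and on whether the direction `j` points towards the root. These
radial amplitudes obey a recursion on `ℕ` which the rescaling by `√(κ - 1) ^ |g|` turns into the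
unitary half-line walk; at the root the Grover coin fixes the constant vector, which is the
reflecting wall with `s = 1`. The squared rescaling factor is the growth rate of the number
`κ (κ - 1) ^ n` of reduced words of length `n + 1`, so summing over spheres gives the claim.
-/

theorem sum_eq_add_card_sub_one_mul {ι R : Type*} [Ring R] {s : Finset ι} {i : ι} (hi : i ∈ s)
    {F : ι → R} {y : R} (hF : ∀ k ∈ s, k ≠ i → F k = y) :
    ∑ k ∈ s, F k = F i + ((s.card : R) - 1) * y := by
  classical
  have hF' : ∀ k ∈ s.erase i, F k = y := fun k hk =>
    hF k (Finset.mem_of_mem_erase hk) (Finset.ne_of_mem_erase hk)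
  rw [← Finset.add_sum_erase s _ hi, Finset.sum_eq_card_nsmul hF', Finset.card_erase_of_mem hi,
    nsmul_eq_mul, Nat.cast_pred (Finset.card_pos.mpr ⟨i, hi⟩)]

theorem lmul_cons_self (j : ℕ) (g : List ℕ) : lmul j (j :: g) = g :=
  if_pos rfl

theorem lmul_of_head?_ne {j : ℕ} {g : List ℕ} (h : g.head? ≠ some j) : lmul j g = j :: g := by
  cases g with
  | nil => rfl
  | cons k r => exact if_neg fun hkj => h (congrArg some hkj)

theorem WordReduced.tail {κ j : ℕ} {g : List ℕ} (h : WordReduced κ (j :: g)) : WordReduced κ g :=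
  ⟨fun l hl => h.1 l (List.mem_cons_of_mem j hl), h.2.tail⟩

theorem WordReduced.cons {κ j : ℕ} {g : List ℕ} (hg : WordReduced κ g) (hj : j < κ)
    (h : g.head? ≠ some j) : WordReduced κ (j :: g) := by
  refine ⟨List.forall_mem_cons.mpr ⟨hj, hg.1⟩, List.isChain_cons.mpr ⟨?_, hg.2⟩⟩
  rintro k hk rfl
  exact h hk

theorem isChain_ofFn_ne_succ {α : Type*} {n : ℕ} (f : Fin (n + 2) → α) :
    (List.ofFn f).IsChain (· ≠ ·) ↔
      f 0 ≠ Fin.tail f 0 ∧ (List.ofFn (Fin.tail f)).IsChain (· ≠ ·) := by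
  rw [List.ofFn_succ, show (fun i => f i.succ) = Fin.tail f from rfl,
    List.ofFn_succ (f := Fin.tail f), List.isChain_cons_cons]

theorem card_isChain_ofFn_ne {α : Type*} [Fintype α] [DecidableEq α] (n : ℕ) :
    (Finset.univ.filter fun f : Fin (n + 1) → α => (List.ofFn f).IsChain (· ≠ ·)).card =
      Fintype.card α * (Fintype.card α - 1) ^ n := by
  induction n with
  | zero => simp
  | succ n ih =>
    have card_cons : (Finset.univ.filter fun f : Fin (n + 2) → α =>
        (List.ofFn f).IsChain (· ≠ ·)).card =
        ((Finset.univ.filter fun f : Fin (n + 1) → α =>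
          (List.ofFn f).IsChain (· ≠ ·)).sigma fun f => {x | x ≠ f 0}).card := by
      refine Finset.card_bij' (fun f _ => ⟨Fin.tail f, f 0⟩) (fun p _ => Fin.cons p.2 p.1)
        (fun f hf => ?_) (fun p hp => ?_) (fun f _ => Fin.cons_self_tail f) (fun p _ => ?_)
      · simpa only [Finset.mem_sigma, Finset.mem_filter_univ, isChain_ofFn_ne_succ, and_comm]
          using hf
      · simpa only [Finset.mem_sigma, Finset.mem_filter_univ, isChain_ofFn_ne_succ, Fin.tail_cons,
          Fin.cons_zero, and_comm] using hp
      · rw [Fin.tail_cons, Fin.cons_zero]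
    simp only [card_cons, Finset.card_sigma, Finset.filter_ne',
      Finset.card_erase_of_mem (Finset.mem_univ _), Finset.card_univ, Finset.sum_const, ih,
      smul_eq_mul, pow_succ, mul_assoc]

theorem cast_card_isChain_ofFn_val_ne {R : Type*} [Ring R] {κ : ℕ} (hκ : 0 < κ) (n : ℕ) :
    ((Finset.univ.filter fun f : Fin (n + 1) → Fin κ =>
      (List.ofFn fun i => (f i : ℕ)).IsChain (· ≠ ·)).card : R) = κ * (κ - 1) ^ n := by
  have isChain_val (f : Fin (n + 1) → Fin κ) :
      (List.ofFn fun i => (f i : ℕ)).IsChain (· ≠ ·) ↔ (List.ofFn f).IsChain (· ≠ ·) := by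
    simp only [List.isChain_ofFn, ne_eq, Fin.val_inj]
  simp only [isChain_val, card_isChain_ofFn_ne, Fintype.card_fin]
  rw [Nat.cast_mul, Nat.cast_pow, Nat.cast_pred hκ]

theorem wordReduced_nil (κ : ℕ) : WordReduced κ [] :=
  ⟨List.forall_mem_nil _, List.isChain_nil⟩

theorem wordReduced_ofFn {κ n : ℕ} {f : Fin n → Fin κ}
    (hf : (List.ofFn fun i => (f i : ℕ)).IsChain (· ≠ ·)) :
    WordReduced κ (List.ofFn fun i => (f i : ℕ)) :=
  ⟨List.forall_mem_ofFn_iff.mpr fun i => (f i).isLt, hf⟩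

/-- A function `F g j` of a reduced word `g` and a direction `j` is radial with profiles `u` and
`v` if it equals `v |g|` when `j` is the first letter of `g`, that is, when `j` points from `g`
towards the root, and `u |g|` in every other direction. At the root every direction is of the
latter kind, so the value `v 0` is irrelevant. -/
structure IsRadial {R : Type*} (κ : ℕ) (F : List ℕ → ℕ → R) (u v : ℕ → R) : Prop where
  apply_head : ∀ {j : ℕ} {r : List ℕ}, WordReduced κ (j :: r) → F (j :: r) j = v (r.length + 1)
  apply_of_head?_ne : ∀ {j : ℕ} {g : List ℕ}, WordReduced κ g → j < κ → g.head? ≠ some j →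
    F g j = u g.length

namespace IsRadial

variable {κ : ℕ}

theorem norm_sq {E : Type*} [Norm E] {F : List ℕ → ℕ → E} {u v : ℕ → E} (hF : IsRadial κ F u v) :
    IsRadial κ (fun g j => ‖F g j‖ ^ 2) (fun n => ‖u n‖ ^ 2) (fun n => ‖v n‖ ^ 2) where
  apply_head hr := by rw [hF.apply_head hr]
  apply_of_head?_ne hg hj h := by rw [hF.apply_of_head?_ne hg hj h]

variable {R : Type*} [Ring R] {F : List ℕ → ℕ → R} {u v : ℕ → R}

theorem sum_nil (hF : IsRadial κ F u v) : ∑ j ∈ Finset.range κ, F [] j = κ * u 0 := by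
  have apply_nil : ∀ j ∈ Finset.range κ, F [] j = u 0 := fun j hj =>
    hF.apply_of_head?_ne (wordReduced_nil κ) (Finset.mem_range.mp hj) (Option.some_ne_none j).symm
  rw [Finset.sum_eq_card_nsmul apply_nil, Finset.card_range, nsmul_eq_mul]

theorem sum_cons (hF : IsRadial κ F u v) {h : ℕ} {r : List ℕ} (hr : WordReduced κ (h :: r)) :
    ∑ j ∈ Finset.range κ, F (h :: r) j = v (r.length + 1) + (κ - 1) * u (r.length + 1) := by
  have hh : h ∈ Finset.range κ := Finset.mem_range.mpr (hr.1 h List.mem_cons_self)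
  rw [sum_eq_add_card_sub_one_mul hh fun j hj hjh =>
      hF.apply_of_head?_ne hr (Finset.mem_range.mp hj) fun e => hjh (Option.some.inj e).symm,
    hF.apply_head hr, Finset.card_range, List.length_cons]

theorem sum_sphere_succ (hF : IsRadial κ F u v) (hκ : 0 < κ) (n : ℕ) :
    ∑ f ∈ Finset.univ.filter
        (fun f : Fin (n + 1) → Fin κ => (List.ofFn fun i => (f i : ℕ)).IsChain (· ≠ ·)),
      ∑ j ∈ Finset.range κ, F (List.ofFn fun i => (f i : ℕ)) j
      = κ * (κ - 1) ^ n * (v (n + 1) + (κ - 1) * u (n + 1)) := by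
  rw [Finset.sum_eq_card_nsmul (b := v (n + 1) + (κ - 1) * u (n + 1)), nsmul_eq_mul,
    cast_card_isChain_ofFn_val_ne hκ]
  intro f hf
  have hw := wordReduced_ofFn (Finset.mem_filter.mp hf).2
  rw [List.ofFn_succ] at hw ⊢
  rw [hF.sum_cons hw, List.length_ofFn]

end IsRadial

theorem alpha_succ {κ j : ℕ} (hj : j < κ) (φ : ℕ → ℂ) (t : ℕ) (g : List ℕ) :
    alpha κ φ (t + 1) g j =
      2 / κ * ∑ k ∈ Finset.range κ, alpha κ φ t (lmul j g) k - alpha κ φ t (lmul j g) j := by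
  simp only [alpha, sub_mul, Finset.sum_sub_distrib, ← Finset.mul_sum, ite_mul, one_mul, zero_mul,
    Finset.sum_ite_eq, Finset.mem_range, hj, if_true]

/-- The radial amplitudes of the Grover walk started from the constant qubit `1`: at time `t`, the
second component is the amplitude at a word of length `n` in the direction of its first letter
(the walker has just moved away from the root), and the first component is the amplitude in every
other direction. At the root `n = 0` all directions are of the latter kind, and the second
component is set to `0`. -/
def radialAmp (κ : ℕ) : ℕ → ℕ → ℂ × ℂ
  | 0, n => if n = 0 then (1, 0) else (0, 0)
  | t + 1, n =>
      (2 * (κ - 1) / κ * (radialAmp κ t (n + 1)).1 - (κ - 2) / κ * (radialAmp κ t (n + 1)).2,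
       if n = 0 then 0
       else if n = 1 then (radialAmp κ t 0).1
       else (κ - 2) / κ * (radialAmp κ t (n - 1)).1 + 2 / κ * (radialAmp κ t (n - 1)).2)

theorem radialAmp_zero_snd (κ t : ℕ) : (radialAmp κ t 0).2 = 0 := by
  cases t <;> rfl

theorem radialAmp_succ_fst (κ t n : ℕ) :
    (radialAmp κ (t + 1) n).1 =
      2 * (κ - 1) / κ * (radialAmp κ t (n + 1)).1 - (κ - 2) / κ * (radialAmp κ t (n + 1)).2 :=
  rfl

theorem radialAmp_succ_one_snd (κ t : ℕ) :
    (radialAmp κ (t + 1) 1).2 = (radialAmp κ t 0).1 :=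
  rfl

theorem radialAmp_succ_add_two_snd (κ t n : ℕ) :
    (radialAmp κ (t + 1) (n + 2)).2 =
      (κ - 2) / κ * (radialAmp κ t (n + 1)).1 + 2 / κ * (radialAmp κ t (n + 1)).2 :=
  rfl

theorem isRadial_alpha_const (κ : ℕ) (c : ℂ) (t : ℕ) :
    IsRadial κ (alpha κ (fun _ => c) t) (fun n => c * (radialAmp κ t n).1)
      (fun n => c * (radialAmp κ t n).2) := by
  induction t with
  | zero =>
    refine ⟨fun _ => ?_, fun {j g} _ _ _ => ?_⟩
    · simp [alpha, radialAmp]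
    · cases g <;> simp [alpha, radialAmp]
  | succ t ih =>
    refine ⟨fun {j r} hr => ?_, fun {j g} hg hj h => ?_⟩
    · have hj : j < κ := hr.1 j List.mem_cons_self
      have hκ : (κ : ℂ) ≠ 0 := Nat.cast_ne_zero.mpr (Nat.ne_zero_of_lt hj)
      have hjr : r.head? ≠ some j := fun h => (List.isChain_cons.mp hr.2).1 j h rfl
      rw [alpha_succ hj, lmul_cons_self, ih.apply_of_head?_ne hr.tail hj hjr]
      cases r with
      | nil =>
        rw [ih.sum_nil, List.length_nil, radialAmp_succ_one_snd]
        field_simp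
        ring
      | cons k r =>
        rw [ih.sum_cons hr.tail, List.length_cons, radialAmp_succ_add_two_snd]
        field_simp
        ring
    · have hκ : (κ : ℂ) ≠ 0 := Nat.cast_ne_zero.mpr (Nat.ne_zero_of_lt hj)
      have hjg := hg.cons hj h
      rw [alpha_succ hj, lmul_of_head?_ne h, ih.sum_cons hjg, ih.apply_head hjg,
        radialAmp_succ_fst]
      field_simp
      ring

section HalfLine

variable {κ : ℕ} {q a b : ℝ}

-- The truncated exponent `n - 1` is harmless: the second radial amplitude vanishes at `n = 0`.
theorem psi_one_eq_radialAmp (hq : q ^ 2 = κ - 1) (ha : a = 2 * q / κ)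
    (hb : b = (κ - 2) / κ) (t n : ℕ) :
    psi a b 1 t n =
      ((q : ℂ) ^ n * (radialAmp κ t n).1, (q : ℂ) ^ (n - 1) * (radialAmp κ t n).2) := by
  have hqC : (κ : ℂ) - 1 = (q : ℂ) ^ 2 := by exact_mod_cast hq.symm
  have haC : (a : ℂ) = 2 * q / κ := by rw [ha]; push_cast; rfl
  have hbC : (b : ℂ) = (κ - 2) / κ := by rw [hb]; push_cast; rfl
  induction t generalizing n with
  | zero => cases n <;> simp [psi, radialAmp]
  | succ t ih =>
    refine Prod.ext ?_ ?_
    · simp only [psi, ih, radialAmp_succ_fst, haC, hbC, hqC, Nat.add_sub_cancel]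
      ring
    · match n with
      | 0 => simp [psi, radialAmp_zero_snd]
      | 1 => simp [psi, ih, radialAmp_succ_one_snd]
      | m + 2 =>
        simp only [psi, ih, radialAmp_succ_add_two_snd, haC, hbC, Nat.add_eq_zero_iff,
          OfNat.ofNat_ne_zero, and_false, if_false, Nat.reduceEqDiff, Nat.add_one_sub_one]
        ring

theorem prob_one_zero (hq : q ^ 2 = κ - 1) (ha : a = 2 * q / κ)
    (hb : b = (κ - 2) / κ) (t : ℕ) :
    prob a b 1 t 0 = ‖(radialAmp κ t 0).1‖ ^ 2 := by
  simp [prob, psi_one_eq_radialAmp hq ha hb, radialAmp_zero_snd]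

theorem prob_one_succ (hq : q ^ 2 = κ - 1) (ha : a = 2 * q / κ)
    (hb : b = (κ - 2) / κ) (t n : ℕ) :
    prob a b 1 t (n + 1) = (κ - 1) ^ n *
      (‖(radialAmp κ t (n + 1)).2‖ ^ 2 + (κ - 1) * ‖(radialAmp κ t (n + 1)).1‖ ^ 2) := by
  have norm_sq_pow (m : ℕ) : ‖(q : ℂ) ^ m‖ ^ 2 = (κ - 1 : ℝ) ^ m := by
    rw [norm_pow, Complex.norm_real, Real.norm_eq_abs, pow_right_comm, sq_abs, hq]
  simp only [prob, psi_one_eq_radialAmp hq ha hb, norm_mul, mul_pow, norm_sq_pow,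
    Nat.add_sub_cancel]
  ring

end HalfLine

theorem natCast_mul_norm_phiU_sq {κ : ℕ} (hκ : 0 < κ) (j : ℕ) : κ * ‖phiU κ j‖ ^ 2 = 1 := by
  have hκ' : (κ : ℝ) ≠ 0 := Nat.cast_ne_zero.mpr hκ.ne'
  rw [phiU, Complex.norm_real, Real.norm_eq_abs, sq_abs, div_pow, one_pow,
    Real.sq_sqrt κ.cast_nonneg, mul_one_div_cancel hκ']

theorem grover_tree_uniform_distance_distribution_general
    (κ : ℕ) (hκ : 0 < κ) (c : ℂ) (a b : ℝ)
    (ha : a = 2 * Real.sqrt ((κ : ℝ) - 1) / κ) (hb : b = ((κ : ℝ) - 2) / κ) (t x : ℕ) :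
    ∑ f ∈ Finset.univ.filter
        (fun f : Fin x → Fin κ => (List.ofFn fun i => (f i : ℕ)).IsChain (· ≠ ·)),
      ∑ j ∈ Finset.range κ,
        ‖alpha κ (fun _ => c) t (List.ofFn fun i => (f i : ℕ)) j‖ ^ 2
      = κ * ‖c‖ ^ 2 * prob a b 1 t x := by
  have hq : Real.sqrt ((κ : ℝ) - 1) ^ 2 = κ - 1 :=
    Real.sq_sqrt (sub_nonneg.mpr (Nat.one_le_cast.mpr hκ))
  have hF := (isRadial_alpha_const κ c t).norm_sq
  cases x with
  | zero =>
    simp only [Finset.univ_unique, List.ofFn_zero, List.isChain_nil, Finset.filter_true,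
      Finset.sum_singleton, hF.sum_nil, prob_one_zero hq ha hb, norm_mul, mul_pow, mul_assoc]
  | succ n =>
    rw [hF.sum_sphere_succ hκ, prob_one_succ hq ha hb]
    simp only [norm_mul, mul_pow]
    ring

/-- With the uniform initial qubit `φ^U` on the tree and the half-line
walk with `s = +1`, the distance distribution of the tree walk equals the position
distribution of the half-line walk: for all `t` and `x`,
`∑_{|g| = x, g reduced} ∑_{j<κ} |α_t(g, j)|² = P(X_t = x)`.
(Reduced words of length `x` are encoded as functions `Fin x → Fin κ` whose associated
list has no two consecutive equal entries.) -/
theorem grover_tree_uniform_distance_distribution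
    (κ : ℕ) (hκ : 3 ≤ κ) (a b : ℝ)
    (ha : a = 2 * Real.sqrt ((κ : ℝ) - 1) / κ) (hb : b = ((κ : ℝ) - 2) / κ)
    (t x : ℕ) :
    ∑ f ∈ Finset.univ.filter
        (fun f : Fin x → Fin κ => (List.ofFn fun i => (f i : ℕ)).IsChain (· ≠ ·)),
      ∑ j ∈ Finset.range κ,
        ‖alpha κ (phiU κ) t (List.ofFn fun i => (f i : ℕ)) j‖ ^ 2
      = prob a b 1 t x := by
  have hκ' : 0 < κ := by omega
  exact (grover_tree_uniform_distance_distribution_general κ hκ' (phiU κ 0) a b ha hb t x).trans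
    (by rw [natCast_mul_norm_phiU_sq hκ', one_mul])

end
end

section
/- In Case (A) (s = +1) there is no localization: for every x ∈ ℤ₊, lim_{t→∞} P(X_{2t} = x) = 0 and lim_{t→∞} P(X_{2t+1} = x) = 0. -/
open Filter Topology

noncomputable section

/-! Let `ρ` and `L` be power series in `Y` with `ρ = Y (b ρ + a) (a ρ - b)` and
`L = 1 + Y (a ρ - b) L`. At `Y = z ^ 2` the recursion is solved by the generating functions
`∑ₜ Ψ_t^L(x + 1) zᵗ = z L ρ (z (b ρ + a)) ^ x` and `∑ₜ Ψ_t^R(x + 1) zᵗ = z L (z (b ρ + a)) ^ x`,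
with `L` itself at the origin. Eliminating `ρ` leaves a quadratic equation for `L`, whence
`2 (1 - b) (1 - Y) L = S + 1 - 2 b - Y` with `S ^ 2 = (1 - w Y) (1 - w̄ Y)`, `w = (a + i b) ^ 2`.
The coefficients of `S` are absolutely summable, with sum `‖1 - w‖ = 2 b`. Hence the
right-hand side vanishes at `Y = 1`: the singularity of `L` there, which would produce
localization, cancels, and the coefficients of `L`, being partial sums of a series with sum `0`,
tend to `0`. The recursion carries this decay from the origin to every other vertex. -/

section GeneratingSeries

open PowerSeries
open scoped ComplexConjugate

/-- The power series `f` has absolutely summable coefficients, with sum `v`: its value at the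
boundary point `1` of the disc of convergence is `v`. -/
def HasAbsSum {R : Type*} [NormedRing R] (f : R⟦X⟧) (v : R) : Prop :=
  (Summable fun n => ‖coeff n f‖) ∧ HasSum (fun n => coeff n f) v

namespace HasAbsSum

section Ring

variable {R : Type*} [NormedRing R]

theorem polynomial (p : Polynomial R) : HasAbsSum (p : R⟦X⟧) (p.eval 1) := by
  have coeff_eq_zero : ∀ n ∉ Finset.range (p.natDegree + 1), coeff n (p : R⟦X⟧) = 0 := by
    intro n hn
    rw [Polynomial.coeff_coe]
    exact Polynomial.coeff_eq_zero_of_natDegree_lt (by simpa using hn)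
  refine ⟨summable_of_ne_finset_zero fun n hn => by rw [coeff_eq_zero n hn, norm_zero], ?_⟩
  simpa [Polynomial.eval_eq_sum_range] using hasSum_sum_of_ne_finset_zero coeff_eq_zero

variable {f g : R⟦X⟧} {u v : R}

theorem add (hf : HasAbsSum f u) (hg : HasAbsSum g v) : HasAbsSum (f + g) (u + v) := by
  refine ⟨.of_nonneg_of_le (fun _ => norm_nonneg _) (fun n => ?_) (hf.1.add hg.1), ?_⟩
  · exact (congrArg norm (map_add (coeff n) f g)).trans_le (norm_add_le _ _)
  · simpa only [map_add] using hf.2.add hg.2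

theorem mul [CompleteSpace R] (hf : HasAbsSum f u) (hg : HasAbsSum g v) :
    HasAbsSum (f * g) (u * v) := by
  have summable_mul := summable_norm_sum_mul_antidiagonal_of_summable_norm hf.1 hg.1
  have tsum_mul := tsum_mul_tsum_eq_tsum_sum_antidiagonal_of_summable_norm hf.1 hg.1
  refine ⟨by simpa only [coeff_mul] using summable_mul, ?_⟩
  simp only [coeff_mul]
  rw [← hf.2.tsum_eq, ← hg.2.tsum_eq, tsum_mul]
  exact summable_mul.of_norm.hasSum

end Ring

section CommRing

variable {R : Type*} [NormedCommRing R] {f : R⟦X⟧} {v : R}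

theorem map_conj [StarRing R] [NormedStarGroup R] (hf : HasAbsSum f v) :
    HasAbsSum (map (starRingEnd R) f) (conj v) := by
  constructor
  · simpa only [coeff_map, starRingEnd_apply, norm_star] using hf.1
  · simpa only [coeff_map, starRingEnd_apply] using hf.2.star

theorem exists_rescale [NormOneClass R] [CompleteSpace R] (hf : HasAbsSum f v) {w : R}
    (hw : ‖w‖ ≤ 1) : ∃ u, HasAbsSum (rescale w f) u := by
  have summable_rescale : Summable fun n => ‖coeff n (rescale w f)‖ := by
    refine .of_nonneg_of_le (fun _ => norm_nonneg _) (fun n => ?_) hf.1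
    calc ‖coeff n (rescale w f)‖ = ‖w ^ n * coeff n f‖ := by rw [coeff_rescale]
      _ ≤ ‖w‖ ^ n * ‖coeff n f‖ := (norm_mul_le _ _).trans (by gcongr; exact norm_pow_le w n)
      _ ≤ ‖coeff n f‖ := mul_le_of_le_one_left (norm_nonneg _) (pow_le_one₀ (norm_nonneg w) hw)
  exact ⟨_, summable_rescale, summable_rescale.of_norm.hasSum⟩

end CommRing

end HasAbsSum

theorem tendsto_coeff_of_hasSum_coeff_mul_one_sub {R : Type*} [CommRing R] [TopologicalSpace R]
    {f : R⟦X⟧} {v : R} (h : HasSum (fun n => coeff n (f * (1 - X))) v) :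
    Tendsto (fun n => coeff n f) atTop (𝓝 v) := by
  have partial_sum : ∀ n, ∑ k ∈ Finset.range (n + 1), coeff k (f * (1 - X)) = coeff n f := by
    intro n
    induction n with
    | zero => simp
    | succ n ih =>
      rw [Finset.sum_range_succ, ih, mul_sub, mul_one, map_sub, coeff_succ_mul_X]
      ring
  exact (h.tendsto_sum_nat.comp (tendsto_add_atTop_nat 1)).congr partial_sum

theorem tendsto_coeff_expand {R : Type*} [CommRing R] [TopologicalSpace R] {p : ℕ} (hp : p ≠ 0)
    {f : R⟦X⟧} (hf : Tendsto (fun n => coeff n f) atTop (𝓝 0)) :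
    Tendsto (fun n => coeff n (expand p hp f)) atTop (𝓝 0) := by
  simp only [coeff_expand]
  exact (hf.comp (Nat.tendsto_div_const_atTop hp)).if' tendsto_const_nhds

theorem sum_range_catalan_div_four_pow (n : ℕ) :
    ∑ k ∈ Finset.range n, (catalan k : ℝ) / 4 ^ k = 2 - 2 * n.centralBinom / 4 ^ n := by
  induction n with
  | zero => simp
  | succ n ih =>
    have centralBinom_eq : ((n : ℝ) + 1) * catalan n = n.centralBinom := by
      exact_mod_cast succ_mul_catalan_eq_centralBinom n
    have centralBinom_succ_eq :
        ((n : ℝ) + 1) * (n + 1).centralBinom = 2 * (2 * n + 1) * n.centralBinom := by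
      exact_mod_cast Nat.succ_mul_centralBinom_succ n
    have centralBinom_succ_eq_catalan :
        ((n + 1).centralBinom : ℝ) = 2 * (2 * n + 1) * catalan n := by
      apply mul_left_cancel₀ (by positivity : (n : ℝ) + 1 ≠ 0)
      rw [centralBinom_succ_eq, ← centralBinom_eq]
      ring
    rw [Finset.sum_range_succ, ih, centralBinom_succ_eq_catalan, ← centralBinom_eq, pow_succ]
    field_simp
    ring

theorem summable_catalan_div_four_pow : Summable fun n => (catalan n : ℝ) / 4 ^ n := by
  refine summable_of_sum_range_le (c := 2) (fun n => by positivity) fun n => ?_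
  rw [sum_range_catalan_div_four_pow]
  exact sub_le_self _ (by positivity)

/-- The Catalan generating function evaluated at `X / 4`, so that its radius of convergence
is `1`. -/
def scaledCatalanSeries : ℂ⟦X⟧ :=
  rescale (1 / 4) (map (Nat.castRingHom ℂ) catalanSeries)

theorem scaledCatalanSeries_sq_mul_X_add_one :
    scaledCatalanSeries ^ 2 * (C (1 / 4) * X) + 1 = scaledCatalanSeries := by
  have h := congrArg (fun f => rescale (1 / 4 : ℂ) (map (Nat.castRingHom ℂ) f))
    catalanSeries_sq_mul_X_add_one
  simpa [scaledCatalanSeries, rescale_X] using h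

theorem exists_hasAbsSum_scaledCatalanSeries : ∃ v, HasAbsSum scaledCatalanSeries v := by
  have summable_norm : Summable fun n => ‖coeff n scaledCatalanSeries‖ := by
    refine summable_catalan_div_four_pow.congr fun n => ?_
    simp [scaledCatalanSeries, coeff_rescale, div_eq_inv_mul]
  exact ⟨_, summable_norm, summable_norm.of_norm.hasSum⟩

/-- The Taylor series of `√(1 - X)`, obtained by solving the quadratic equation of the Catalan
generating function. -/
def sqrtOneSubX : ℂ⟦X⟧ :=
  1 + C (-(1 / 2)) * X * scaledCatalanSeries

theorem sqrtOneSubX_sq : sqrtOneSubX ^ 2 = 1 - X := by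
  have hC₂ : (C (-(1 / 2) : ℂ) : ℂ⟦X⟧) * 2 = -1 := by
    rw [← map_ofNat (C (R := ℂ)) 2, ← map_mul, ← map_one (C (R := ℂ)), ← map_neg]
    norm_num
  have hC₄ : (C (1 / 4 : ℂ) : ℂ⟦X⟧) = C (-(1 / 2)) * C (-(1 / 2)) := by
    rw [← map_mul]
    norm_num
  have hcatalan := scaledCatalanSeries_sq_mul_X_add_one
  rw [hC₄] at hcatalan
  rw [sqrtOneSubX]
  linear_combination X * hcatalan + X * scaledCatalanSeries * hC₂

theorem constantCoeff_sqrtOneSubX : constantCoeff sqrtOneSubX = 1 := by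
  simp [sqrtOneSubX]

theorem exists_hasAbsSum_sqrtOneSubX : ∃ v, HasAbsSum sqrtOneSubX v := by
  obtain ⟨v, hv⟩ := exists_hasAbsSum_scaledCatalanSeries
  have h := (HasAbsSum.polynomial 1).add
    ((HasAbsSum.polynomial (.C (-(1 / 2) : ℂ) * .X)).mul hv)
  simp only [Polynomial.coe_one, Polynomial.coe_mul, Polynomial.coe_C, Polynomial.coe_X] at h
  exact ⟨_, h⟩

theorem exists_hasAbsSum_sq_eq_one_sub_C_mul_X {w : ℂ} (hw : ‖w‖ ≤ 1) :
    ∃ (f : ℂ⟦X⟧) (v : ℂ), f ^ 2 = 1 - C w * X ∧ constantCoeff f = 1 ∧ HasAbsSum f v ∧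
      v ^ 2 = 1 - w := by
  obtain ⟨_, h⟩ := exists_hasAbsSum_sqrtOneSubX
  obtain ⟨v, hv⟩ := h.exists_rescale hw
  have sq_eq : rescale w sqrtOneSubX ^ 2 = 1 - C w * X := by
    rw [← map_pow, sqrtOneSubX_sq, map_sub, map_one, rescale_X]
  have constantCoeff_eq : constantCoeff (rescale w sqrtOneSubX) = 1 := by
    rw [← coeff_zero_eq_constantCoeff_apply, coeff_rescale, pow_zero, one_mul,
      coeff_zero_eq_constantCoeff_apply, constantCoeff_sqrtOneSubX]
  refine ⟨_, v, sq_eq, constantCoeff_eq, hv, ?_⟩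
  have hasAbsSum_sq : HasAbsSum (1 - C w * X) (v ^ 2) := by
    rw [← sq_eq, sq, sq]
    exact hv.mul hv
  have hasAbsSum_linear : HasAbsSum (1 - C w * X) (1 - w) := by
    simpa using HasAbsSum.polynomial (1 - .C w * .X)
  exact hasAbsSum_sq.2.unique hasAbsSum_linear.2

theorem exists_hasAbsSum_sq_eq_mul_conj {w : ℂ} (hw : ‖w‖ ≤ 1) :
    ∃ S : ℂ⟦X⟧, S ^ 2 = (1 - C w * X) * (1 - C (conj w) * X) ∧ constantCoeff S = 1 ∧
      HasAbsSum S ‖1 - w‖ := by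
  obtain ⟨f, v, f_sq, constantCoeff_f, hasAbsSum_f, v_sq⟩ :=
    exists_hasAbsSum_sq_eq_one_sub_C_mul_X hw
  refine ⟨f * map (starRingEnd ℂ) f, ?_, ?_, ?_⟩
  · rw [mul_pow, ← map_pow, f_sq]
    simp
  · rw [map_mul, ← coeff_zero_eq_constantCoeff_apply (map _ f), coeff_map,
      coeff_zero_eq_constantCoeff_apply, constantCoeff_f, map_one, one_mul]
  · have value_eq : v * conj v = ‖1 - w‖ := by
      rw [Complex.mul_conj', ← v_sq, norm_pow, Complex.ofReal_pow]
    exact value_eq ▸ hasAbsSum_f.mul hasAbsSum_f.map_conj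

/-- `L` is the generating function `∑ₙ Ψ_{2n}^L(0) Yⁿ` of the left amplitudes at the origin, for the
walk with coin parameters `a, b`, `a ^ 2 + b ^ 2 = 1`, and wall sign `1`, characterized by the
quadratic equation left after eliminating the other amplitudes. -/
structure IsOriginSeries {R : Type*} [CommRing R] (b : R) (L : R⟦X⟧) : Prop where
  constantCoeff_eq_one : constantCoeff L = 1
  quadratic : (1 - C b) * (1 - X) * L ^ 2 + (2 * C b - 1 + X) * L = C b

theorem isOriginSeries_of_sq_eq {R : Type*} [CommRing R] [IsDomain R] [NeZero (2 : R)]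
    {b : R} (hb : b ≠ 1) {S L : R⟦X⟧} (hS : S ^ 2 = 1 - 2 * (1 - 2 * C b ^ 2) * X + X ^ 2)
    (hS₀ : constantCoeff S = 1) (hL : 2 * (1 - C b) * (1 - X) * L = S + 1 - 2 * C b - X) :
    IsOriginSeries b L := by
  constructor
  · apply mul_left_cancel₀ (mul_ne_zero two_ne_zero (sub_ne_zero.mpr hb.symm))
    have h := congrArg constantCoeff hL
    simp only [map_sub, map_add, map_mul, map_one, constantCoeff_C, constantCoeff_X, hS₀,
      map_ofNat constantCoeff 2] at h
    linear_combination h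
  · have constantCoeff_ne_zero : constantCoeff (2 * (2 * (1 - C b) * (1 - X)) : R⟦X⟧) ≠ 0 := by
      simp [map_ofNat constantCoeff 2, sub_eq_zero, hb.symm, two_ne_zero]
    have factor_ne_zero : (2 * (2 * (1 - C b) * (1 - X)) : R⟦X⟧) ≠ 0 :=
      fun h => constantCoeff_ne_zero (by rw [h, map_zero])
    apply mul_left_cancel₀ factor_ne_zero
    linear_combination
      (2 * (1 - C b) * (1 - X) * L + S - 1 + 2 * C b + X) * hL + hS

theorem IsOriginSeries.exists_reflectionSeries {K : Type*} [Field K] {a b : K}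
    (hab : a ^ 2 + b ^ 2 = 1) (ha : a ≠ 0) {L : K⟦X⟧} (hL : IsOriginSeries b L) :
    ∃ ρ : K⟦X⟧, ρ = X * (C b * ρ + C a) * (C a * ρ - C b) ∧
      L = 1 + X * (C a * ρ - C b) * L := by
  have hL₀ := hL.constantCoeff_eq_one
  have hL_ne : L ≠ 0 := by
    rintro rfl
    simp at hL₀
  have hLinv : L * L⁻¹ = 1 := L.mul_inv_cancel (by simp [hL₀])
  obtain ⟨P, hP⟩ : X ∣ 1 - L⁻¹ := by
    simp [X_dvd_iff, hL₀]
  have hLP : L = 1 + X * P * L := by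
    linear_combination hLinv + L * hP
  have hP_quadratic : P + C b = X * (C b * P + 1) * P := by
    apply mul_left_cancel₀ (mul_ne_zero (pow_ne_zero 2 hL_ne) X_ne_zero)
    linear_combination (C b * (X * P * L + L - 1) + (X - 1) * L) * hLP + hL.quadratic
  have hC : (C a : K⟦X⟧) * C a⁻¹ = 1 := by
    rw [← map_mul, mul_inv_cancel₀ ha, map_one]
  have hCab : (C a : K⟦X⟧) ^ 2 + C b ^ 2 = 1 := by
    rw [← map_pow, ← map_pow, ← map_add, hab, map_one]
  have hρ : C a * (C a⁻¹ * (P + C b)) = P + C b := by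
    linear_combination (P + C b) * hC
  refine ⟨C a⁻¹ * (P + C b), ?_, ?_⟩
  · apply mul_left_cancel₀ ((map_ne_zero_iff C C_injective).mpr ha)
    rw [hρ, add_sub_cancel_right]
    linear_combination hP_quadratic - X * P * C b * hρ - X * P * hCab
  · rwa [hρ, add_sub_cancel_right]

theorem norm_one_sub_sq_of_norm_eq_one {ζ : ℂ} (hζ : ‖ζ‖ = 1) : ‖1 - ζ ^ 2‖ = 2 * |ζ.im| := by
  have mul_conj_ζ : ζ * conj ζ = 1 := by
    simp [Complex.mul_conj', hζ]
  calc ‖1 - ζ ^ 2‖ = ‖-ζ * (ζ - conj ζ)‖ := by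
        congr 1
        linear_combination -mul_conj_ζ
    _ = 2 * |ζ.im| := by simp [Complex.sub_conj, hζ]

theorem exists_hasAbsSum_sq_eq {a b : ℝ} (hab : a ^ 2 + b ^ 2 = 1) (hb : 0 ≤ b) :
    ∃ S : ℂ⟦X⟧, S ^ 2 = 1 - 2 * (1 - 2 * C (b : ℂ) ^ 2) * X + X ^ 2 ∧ constantCoeff S = 1 ∧
      HasAbsSum S (2 * b) := by
  set ζ : ℂ := ⟨a, b⟩
  have norm_ζ : ‖ζ‖ = 1 := by
    rw [Complex.norm_def, Complex.normSq_mk, Real.sqrt_eq_one]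
    linarith
  obtain ⟨S, hS, hS₀, hS_sum⟩ := exists_hasAbsSum_sq_eq_mul_conj
    (w := ζ ^ 2) (by simp [norm_ζ])
  have norm_one_sub : ‖1 - ζ ^ 2‖ = 2 * b := by
    rw [norm_one_sub_sq_of_norm_eq_one norm_ζ, abs_of_nonneg hb]
  refine ⟨S, ?_, hS₀, by simpa [norm_one_sub] using hS_sum⟩
  have mul_conj_ζ : ζ * conj ζ = 1 := by
    simp [Complex.mul_conj', norm_ζ]
  have ζ_sub_conj : ζ - conj ζ = 2 * b * Complex.I := by
    simp [Complex.sub_conj, ζ]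
  have sum_eq : ζ ^ 2 + conj (ζ ^ 2) = 2 * (1 - 2 * (b : ℂ) ^ 2) := by
    rw [map_pow]
    linear_combination (ζ - conj ζ + 2 * b * Complex.I) * ζ_sub_conj + 2 * mul_conj_ζ
      + 4 * (b : ℂ) ^ 2 * Complex.I_sq
  have prod_eq : ζ ^ 2 * conj (ζ ^ 2) = 1 := by
    rw [map_pow, ← mul_pow, mul_conj_ζ, one_pow]
  have C_sum_eq : (C (ζ ^ 2) + C (conj (ζ ^ 2)) : ℂ⟦X⟧) = 2 * (1 - 2 * C (b : ℂ) ^ 2) := by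
    rw [← map_add, sum_eq]
    simp [map_ofNat C 2]
  have C_prod_eq : (C (ζ ^ 2) * C (conj (ζ ^ 2)) : ℂ⟦X⟧) = 1 := by
    rw [← map_mul, prod_eq, map_one]
  rw [hS]
  linear_combination X ^ 2 * C_prod_eq - X * C_sum_eq

theorem exists_isOriginSeries_tendsto_coeff {a b : ℝ} (hab : a ^ 2 + b ^ 2 = 1)
    (ha : a ≠ 0) (hb : 0 ≤ b) :
    ∃ L : ℂ⟦X⟧, IsOriginSeries (b : ℂ) L ∧ Tendsto (fun n => coeff n L) atTop (𝓝 0) := by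
  have hb_ne_one : b ≠ 1 := by
    rintro rfl
    exact ha (by simpa using hab)
  have hB : (b : ℂ) ≠ 1 := by exact_mod_cast hb_ne_one
  obtain ⟨S, hS, hS₀, hS_sum⟩ := exists_hasAbsSum_sq_eq hab hb
  have h₂ : 2 * (1 - C (b : ℂ)) * C (2 * (1 - (b : ℂ)))⁻¹ = (1 : ℂ⟦X⟧) := by
    have hC : (C (2 * (1 - (b : ℂ))) : ℂ⟦X⟧) = 2 * (1 - C (b : ℂ)) := by simp [map_ofNat C 2]
    rw [← hC, ← map_mul, mul_inv_cancel₀ (mul_ne_zero two_ne_zero (sub_ne_zero.mpr hB.symm)),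
      map_one]
  obtain ⟨L, hL⟩ : ∃ L : ℂ⟦X⟧,
      L * (1 - X) = C (2 * (1 - (b : ℂ)))⁻¹ * (S + (1 - 2 * C (b : ℂ) - X)) :=
    ⟨_ * mk 1, by rw [mul_assoc, mk_one_mul_one_sub_eq_one, mul_one]⟩
  have hLS : 2 * (1 - C (b : ℂ)) * (1 - X) * L = S + 1 - 2 * C (b : ℂ) - X := by
    linear_combination 2 * (1 - C (b : ℂ)) * hL + (S + 1 - 2 * C (b : ℂ) - X) * h₂
  refine ⟨L, isOriginSeries_of_sq_eq hB hS hS₀ hLS, ?_⟩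
  apply tendsto_coeff_of_hasSum_coeff_mul_one_sub
  have hpoly : HasAbsSum (1 - 2 * C (b : ℂ) - X : ℂ⟦X⟧) (1 - 2 * b - 1) := by
    simpa [map_ofNat C 2] using HasAbsSum.polynomial (1 - .C 2 * .C (b : ℂ) - .X)
  have hconst : HasAbsSum (C (2 * (1 - (b : ℂ)))⁻¹) (2 * (1 - (b : ℂ)))⁻¹ := by
    simpa using HasAbsSum.polynomial (.C (2 * (1 - (b : ℂ)))⁻¹)
  simpa [hL] using (hconst.mul (hS_sum.add hpoly)).2

end GeneratingSeries

section HalfLineWalk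

open PowerSeries

variable {a b s : ℝ}

theorem psi_eq_coeff {f g : ℕ → ℂ⟦X⟧} (hf_zero : f 0 = 1 + X * (C (a : ℂ) * f 1 - C (b : ℂ) * g 1))
    (hf_succ : ∀ x, f (x + 1) = X * (C (a : ℂ) * f (x + 2) - C (b : ℂ) * g (x + 2)))
    (hg_zero : g 0 = 0) (hg_one : g 1 = X * (C (s : ℂ) * f 0))
    (hg_succ : ∀ x, g (x + 2) = X * (C (b : ℂ) * f (x + 1) + C (a : ℂ) * g (x + 1))) (t x : ℕ) :
    psi a b s t x = (coeff t (f x), coeff t (g x)) := by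
  induction t generalizing x with
  | zero =>
    rcases x with _ | _ | x
    · simp [psi, hf_zero, hg_zero]
    · simp [psi, hf_succ 0, hg_one]
    · simp [psi, hf_succ (x + 1), hg_succ x]
  | succ t ih =>
    rcases x with _ | _ | x
    · simp [psi, ih, hf_zero, hg_zero, coeff_one, coeff_succ_X_mul]
    · simp [psi, ih, hf_succ 0, hg_one, coeff_succ_X_mul]
    · simp [psi, ih, hf_succ (x + 1), hg_succ x, coeff_succ_X_mul]

theorem psi_zero_eq_coeff {L ρ : ℂ⟦X⟧}
    (hρ : ρ = X ^ 2 * (C (b : ℂ) * ρ + C (a : ℂ)) * (C (a : ℂ) * ρ - C (b : ℂ)))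
    (hL : L = 1 + C (s : ℂ) * X ^ 2 * (C (a : ℂ) * ρ - C (b : ℂ)) * L) (t : ℕ) :
    psi a b s t 0 = (coeff t L, 0) := by
  set M := X * (C (b : ℂ) * ρ + C (a : ℂ)) with hM
  let f : ℕ → ℂ⟦X⟧ := fun
    | 0 => L
    | x + 1 => C (s : ℂ) * X * L * ρ * M ^ x
  let g : ℕ → ℂ⟦X⟧ := fun
    | 0 => 0
    | x + 1 => C (s : ℂ) * X * L * M ^ x
  rw [psi_eq_coeff (f := f) (g := g) (t := t) ?_ ?_ rfl ?_ ?_]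
  · simp [f, g]
  · linear_combination hL
  · intro x
    simp only [f, g]
    rw [pow_succ]
    linear_combination C (s : ℂ) * X * L * M ^ x * hρ
  · simp only [f, g]
    ring
  · intro x
    simp only [f, g]
    rw [pow_succ, hM]
    ring

theorem tendsto_psi_zero (hab : a ^ 2 + b ^ 2 = 1) (ha : a ≠ 0) (hb : 0 ≤ b) :
    Tendsto (fun t => psi a b 1 t 0) atTop (𝓝 0) := by
  obtain ⟨L, hL, hL_lim⟩ := exists_isOriginSeries_tendsto_coeff hab ha hb
  obtain ⟨ρ, hρ, hLρ⟩ := hL.exists_reflectionSeries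
    (by exact_mod_cast hab : (a : ℂ) ^ 2 + (b : ℂ) ^ 2 = 1) (by exact_mod_cast ha)
  have hρ' := congrArg (expand 2 two_ne_zero) hρ
  have hLρ' := congrArg (expand 2 two_ne_zero) hLρ
  simp only [map_mul, map_add, map_sub, map_one, expand_C, expand_X] at hρ' hLρ'
  have psi_eq : ∀ t, psi a b 1 t 0 = (coeff t (expand 2 two_ne_zero L), 0) :=
    psi_zero_eq_coeff hρ' (by simpa using hLρ')
  simp only [psi_eq]
  exact (tendsto_coeff_expand two_ne_zero hL_lim).prodMk_nhds tendsto_const_nhds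

theorem tendsto_psi_of_tendsto_psi_zero (ha : a ≠ 0)
    (h : Tendsto (fun t => psi a b s t 0) atTop (𝓝 0)) (x : ℕ) :
    Tendsto (fun t => psi a b s t x) atTop (𝓝 0) := by
  induction x with
  | zero => exact h
  | succ x ih =>
    have hL := (continuous_fst.tendsto _).comp ih
    have hR := (continuous_snd.tendsto _).comp ih
    have hR_succ : Tendsto (fun t => (psi a b s t (x + 1)).2) atTop (𝓝 0) := by
      rw [← tendsto_add_atTop_iff_nat 1]
      rcases x with _ | x
      · simpa [psi] using hL.const_mul (s : ℂ)
      · simpa [psi] using (hL.const_mul (b : ℂ)).add (hR.const_mul (a : ℂ))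
    have fst_eq : ∀ t, (psi a b s t (x + 1)).1 =
        (a : ℂ)⁻¹ * ((psi a b s (t + 1) x).1 + b * (psi a b s t (x + 1)).2) := by
      intro t
      rw [psi, sub_add_cancel, inv_mul_cancel_left₀ (Complex.ofReal_ne_zero.mpr ha)]
    have hL_succ : Tendsto (fun t => (psi a b s t (x + 1)).1) atTop (𝓝 0) := by
      simp only [fst_eq]
      simpa using ((hL.comp (tendsto_add_atTop_nat 1)).add
        (hR_succ.const_mul (b : ℂ))).const_mul (a : ℂ)⁻¹
    exact hL_succ.prodMk_nhds hR_succ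

theorem half_line_caseA_no_localization_general (hab : a ^ 2 + b ^ 2 = 1) (ha : a ≠ 0)
    (hb : 0 ≤ b) (x : ℕ) : Tendsto (fun t => prob a b 1 t x) atTop (𝓝 0) := by
  have h := tendsto_psi_of_tendsto_psi_zero ha (tendsto_psi_zero hab ha hb) x
  simpa [prob] using (h.fst_nhds.norm.pow 2).add (h.snd_nhds.norm.pow 2)

theorem coin_sq_add_sq {κ : ℝ} (hκ : 1 ≤ κ) :
    (2 * √(κ - 1) / κ) ^ 2 + ((κ - 2) / κ) ^ 2 = 1 := by
  have hκ₀ : κ ≠ 0 := by positivity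
  rw [div_pow, div_pow, mul_pow, Real.sq_sqrt (sub_nonneg.mpr hκ)]
  field_simp
  ring

theorem coin_ne_zero {κ : ℝ} (hκ : 1 < κ) : 2 * √(κ - 1) / κ ≠ 0 := by
  have : 0 < √(κ - 1) := Real.sqrt_pos.mpr (sub_pos.mpr hκ)
  positivity

end HalfLineWalk

/-- In Case (A) (`s = +1`) there is no localization: for every `x ∈ ℤ₊`,
`lim_{t→∞} P(X_{2t} = x) = 0` and `lim_{t→∞} P(X_{2t+1} = x) = 0`. -/
theorem half_line_caseA_no_localization
    (κ : ℕ) (hκ : 3 ≤ κ) (a b : ℝ)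
    (ha : a = 2 * Real.sqrt ((κ : ℝ) - 1) / κ) (hb : b = ((κ : ℝ) - 2) / κ)
    (x : ℕ) :
    Tendsto (fun t : ℕ => prob a b 1 (2 * t) x) atTop (𝓝 0) ∧
    Tendsto (fun t : ℕ => prob a b 1 (2 * t + 1) x) atTop (𝓝 0) := by
  have hκ' : (3 : ℝ) ≤ κ := by exact_mod_cast hκ
  subst ha hb
  have h := half_line_caseA_no_localization_general (coin_sq_add_sq (by linarith))
    (coin_ne_zero (by linarith)) (div_nonneg (by linarith) (by linarith)) x
  have tendsto_two_mul : Tendsto (fun t : ℕ => 2 * t) atTop atTop :=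
    tendsto_id.const_mul_atTop' two_pos
  exact ⟨h.comp tendsto_two_mul, h.comp ((tendsto_add_atTop_nat 1).comp tendsto_two_mul)⟩

end
end

section
/- In Case (B) (s = −1), for every x ∈ ℤ₊ the limit P_*^{(O)}(x) = lim_{t→∞} P(X_{2t+1} = x) exists and is given by: P_*^{(O)}(x) = κ·((κ−2)/(κ−1))²·(1/(κ−1))^x for odd x, and P_*^{(O)}(x) = 0 for even x. -/
open Filter Topology

noncomputable section

/-!
Away from the wall, the generating functions of the left and right amplitudes at a site are
proportional, and the factor solves a quadratic equation over `ℂ⟦X⟧` whose discriminant is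
`(1 - ζX)(1 - ζ̄X)` with `|ζ| = 1`. The square root of the discriminant has absolutely summable
coefficients because `√(1 - X)` does.

For `s = -1` the generating function at the origin is therefore `g / (1 - X)` with `g` in the
Wiener algebra. Its coefficients are the partial sums of those of `g`, so they converge to `g(1)`,
whatever the remaining singularities of `g` on the unit circle. The recurrences of the walk carry
the limit from the origin to every other site.
-/

open PowerSeries ComplexConjugate

section WienerAlgebra

variable {R : Type*} [NormedCommRing R]

variable (R) in
/-- The Wiener algebra: power series with absolutely summable coefficients. -/
def wienerAlgebra : Subalgebra R R⟦X⟧ where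
  carrier := {f | Summable fun n => ‖coeff n f‖}
  mul_mem' {f g} hf hg := by
    simpa only [Set.mem_ofPred_eq, coeff_mul] using
      summable_norm_sum_mul_antidiagonal_of_summable_norm hf hg
  add_mem' {f g} hf hg := by
    simp only [Set.mem_ofPred_eq, map_add] at *
    exact .of_nonneg_of_le (fun _ => norm_nonneg _) (fun _ => norm_add_le _ _) (hf.add hg)
  algebraMap_mem' r := by
    refine summable_of_ne_finset_zero (s := {0}) fun n hn => ?_
    rw [Finset.mem_singleton] at hn
    simp [coeff_C, hn]

lemma mem_wienerAlgebra_iff {f : R⟦X⟧} :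
    f ∈ wienerAlgebra R ↔ Summable fun n => ‖coeff n f‖ :=
  Iff.rfl

lemma C_mem_wienerAlgebra (r : R) : C r ∈ wienerAlgebra R :=
  (wienerAlgebra R).algebraMap_mem r

lemma X_mem_wienerAlgebra : X ∈ wienerAlgebra R := by
  refine summable_of_ne_finset_zero (s := {1}) fun n hn => ?_
  rw [Finset.mem_singleton] at hn
  simp [coeff_X, hn]

lemma rescale_mem_wienerAlgebra [NormOneClass R] {r : R} (hr : ‖r‖ ≤ 1) {f : R⟦X⟧}
    (hf : f ∈ wienerAlgebra R) : rescale r f ∈ wienerAlgebra R := by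
  refine Summable.of_nonneg_of_le (fun _ => norm_nonneg _) (fun n => ?_) hf
  calc ‖coeff n (rescale r f)‖ ≤ ‖r ^ n‖ * ‖coeff n f‖ := by
        rw [coeff_rescale]; exact norm_mul_le _ _
    _ ≤ ‖coeff n f‖ :=
        mul_le_of_le_one_left (norm_nonneg _)
          ((norm_pow_le _ _).trans (pow_le_one₀ (norm_nonneg _) hr))

variable [CompleteSpace R]

lemma summable_coeff (f : wienerAlgebra R) : Summable fun n => coeff n (f : R⟦X⟧) :=
  Summable.of_norm f.2

variable (R) in
/-- The value `f(1) = ∑ fₙ` of a series in the Wiener algebra. -/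
def evalOne : wienerAlgebra R →ₐ[R] R where
  toFun f := ∑' n, coeff n (f : R⟦X⟧)
  map_one' := by simp [coeff_one]
  map_zero' := by simp
  map_mul' f g := by
    simp only [MulMemClass.coe_mul, coeff_mul]
    exact (tsum_mul_tsum_eq_tsum_sum_antidiagonal_of_summable_norm f.2 g.2).symm
  map_add' f g := by
    simpa using (summable_coeff f).tsum_add (summable_coeff g)
  commutes' r := by
    simp [coeff_C]

lemma evalOne_apply (f : wienerAlgebra R) : evalOne R f = ∑' n, coeff n (f : R⟦X⟧) :=
  rfl

lemma evalOne_C (r : R) : evalOne R ⟨C r, C_mem_wienerAlgebra r⟩ = r :=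
  (evalOne R).commutes r

lemma evalOne_X : evalOne R ⟨X, X_mem_wienerAlgebra⟩ = 1 := by
  simp [evalOne_apply, coeff_X]

-- The coefficients of `f = g / (1 - X)` are the partial sums of those of `g`.
lemma tendsto_coeff_of_one_sub_X_mul_eq {f : R⟦X⟧} {g : wienerAlgebra R}
    (h : (1 - X) * f = (g : R⟦X⟧)) :
    Tendsto (fun n => coeff n f) atTop (𝓝 (evalOne R g)) := by
  have hf : f = (g : R⟦X⟧) * mk 1 := by
    rw [← h, mul_right_comm, mul_comm (1 - X), mk_one_mul_one_sub_eq_one, one_mul]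
  have hcoeff (n : ℕ) : coeff n f = ∑ k ∈ Finset.range (n + 1), coeff k (g : R⟦X⟧) := by
    simp [hf, coeff_mul, Finset.Nat.sum_antidiagonal_eq_sum_range_succ_mk]
  simp only [hcoeff]
  exact (summable_coeff g).hasSum.tendsto_sum_nat.comp (tendsto_add_atTop_nat 1)

end WienerAlgebra

section SquareRoot

lemma succ_mul_choose_succ {R : Type*} [CommRing R] [BinomialRing R] (r : R) (n : ℕ) :
    (n + 1) * Ring.choose r (n + 1) = (r - n) * Ring.choose r n := by
  have h := Ring.choose_smul_choose r n.le_succ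
  simp only [Nat.succ_eq_add_one, Nat.choose_succ_self_right, Nat.add_sub_cancel_left,
    Ring.choose_one_right, nsmul_eq_mul, Nat.cast_add, Nat.cast_one] at h
  rw [h, mul_comm]

-- The signed coefficients of `(1 + X) ^ (r - 1)` decrease to a limit, and those of `(1 + X) ^ r`
-- are their successive differences, so the sum of absolute values telescopes.
lemma summable_abs_choose {r : ℝ} (h₀ : 0 ≤ r) (h₁ : r ≤ 1) :
    Summable fun n => |Ring.choose r n| := by
  set d : ℕ → ℝ := fun n => (-1) ^ n * Ring.choose (r - 1) n with hd
  have hd_succ (n : ℕ) : (n + 1) * d (n + 1) = (n + 1 - r) * d n := by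
    simp only [hd, pow_succ]
    linear_combination (-(-1) ^ n) * succ_mul_choose_succ (r - 1) n
  have hd_nonneg (n : ℕ) : 0 ≤ d n := by
    induction n with
    | zero => simp [hd]
    | succ n ih =>
      have : 0 ≤ (n + 1 : ℝ) * d (n + 1) := by
        rw [hd_succ]
        exact mul_nonneg (by linarith [n.cast_nonneg (α := ℝ)]) ih
      exact nonneg_of_mul_nonneg_right this (by positivity)
  have hd_anti (n : ℕ) : d (n + 1) ≤ d n := by
    have : (n + 1 : ℝ) * d (n + 1) ≤ (n + 1) * d n := by
      rw [hd_succ]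
      exact mul_le_mul_of_nonneg_right (by linarith) (hd_nonneg n)
    exact le_of_mul_le_mul_left this (by positivity)
  have habs (n : ℕ) : |Ring.choose r (n + 1)| = d n - d (n + 1) := by
    have hpascal : Ring.choose r (n + 1) = (-1) ^ n * (d n - d (n + 1)) := by
      have h := Ring.choose_succ_succ (r - 1) n
      rw [sub_add_cancel] at h
      have hsign : ((-1 : ℝ) ^ n) ^ 2 = 1 := by rw [pow_right_comm, neg_one_sq, one_pow]
      simp only [hd, pow_succ]
      linear_combination h - (Ring.choose (r - 1) n + Ring.choose (r - 1) (n + 1)) * hsign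
    rw [hpascal, abs_mul, abs_neg_one_pow, one_mul, abs_of_nonneg (sub_nonneg.2 (hd_anti n))]
  refine (summable_nat_add_iff 1).1 (summable_of_sum_range_le (c := d 0) (fun n => abs_nonneg _)
    fun n => ?_)
  simp only [habs, Finset.sum_range_sub']
  exact sub_le_self _ (hd_nonneg n)

/-- The power series of `√(1 - ζX)`, with constant coefficient `1`. -/
def sqrtOneSub (ζ : ℂ) : ℂ⟦X⟧ :=
  rescale (-ζ) (PowerSeries.binomialSeries ℂ (1 / 2 : ℝ))

lemma coeff_sqrtOneSub (ζ : ℂ) (n : ℕ) :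
    coeff n (sqrtOneSub ζ) = (-ζ) ^ n * (Ring.choose (1 / 2 : ℝ) n : ℝ) := by
  simp [sqrtOneSub, coeff_rescale]

lemma constantCoeff_sqrtOneSub (ζ : ℂ) : constantCoeff (sqrtOneSub ζ) = 1 := by
  simpa using coeff_sqrtOneSub ζ 0

lemma sqrtOneSub_sq (ζ : ℂ) : sqrtOneSub ζ ^ 2 = 1 - C ζ * X := by
  have h : PowerSeries.binomialSeries ℂ (1 / 2 : ℝ) ^ 2 = 1 + X := by
    rw [sq, ← binomialSeries_add, add_halves, ← Nat.cast_one, binomialSeries_nat, pow_one]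
  rw [sqrtOneSub, ← map_pow, h, map_add, map_one, rescale_X, map_neg, neg_mul, sub_eq_add_neg]

lemma sqrtOneSub_mem_wienerAlgebra {ζ : ℂ} (hζ : ‖ζ‖ ≤ 1) : sqrtOneSub ζ ∈ wienerAlgebra ℂ := by
  refine rescale_mem_wienerAlgebra (by rwa [norm_neg]) ?_
  simpa [mem_wienerAlgebra_iff] using
    summable_abs_choose (r := 1 / 2) (by norm_num) (by norm_num)

/-- The power series of `√((1 - ζX)(1 - ζ̄X))`, with constant coefficient `1`. -/
def sqrtNormSq (ζ : ℂ) : ℂ⟦X⟧ :=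
  sqrtOneSub ζ * sqrtOneSub (conj ζ)

lemma constantCoeff_sqrtNormSq (ζ : ℂ) : constantCoeff (sqrtNormSq ζ) = 1 := by
  simp [sqrtNormSq, constantCoeff_sqrtOneSub]

lemma sqrtNormSq_sq {ζ : ℂ} (hζ : ‖ζ‖ = 1) :
    sqrtNormSq ζ ^ 2 = (1 - X) ^ 2 + C (‖1 - ζ‖ ^ 2 : ℂ) * X := by
  have hconj : ζ * conj ζ = 1 := by rw [Complex.mul_conj', hζ]; simp
  have hnorm : (‖1 - ζ‖ ^ 2 : ℂ) = 2 - (ζ + conj ζ) := by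
    rw [← Complex.mul_conj', map_sub, map_one]
    linear_combination hconj
  have hconjC : C ζ * C (conj ζ) = 1 := by rw [← map_mul, hconj, map_one]
  rw [sqrtNormSq, mul_pow, sqrtOneSub_sq, sqrtOneSub_sq, hnorm]
  simp only [map_sub, map_add, map_ofNat]
  linear_combination X ^ 2 * hconjC

lemma sqrtNormSq_mem_wienerAlgebra {ζ : ℂ} (hζ : ‖ζ‖ ≤ 1) : sqrtNormSq ζ ∈ wienerAlgebra ℂ :=
  mul_mem (sqrtOneSub_mem_wienerAlgebra hζ)
    (sqrtOneSub_mem_wienerAlgebra (by rwa [Complex.norm_conj]))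

-- The two factors take conjugate values at `1`, which fixes the sign of the root.
lemma evalOne_sqrtNormSq {ζ : ℂ} (hζ : ‖ζ‖ ≤ 1) :
    evalOne ℂ ⟨sqrtNormSq ζ, sqrtNormSq_mem_wienerAlgebra hζ⟩ = ‖1 - ζ‖ := by
  have hmem := sqrtOneSub_mem_wienerAlgebra hζ
  have hmem' := sqrtOneSub_mem_wienerAlgebra (ζ := conj ζ) (by rwa [Complex.norm_conj])
  set w := evalOne ℂ ⟨sqrtOneSub ζ, hmem⟩ with hw
  have hconj : evalOne ℂ ⟨sqrtOneSub (conj ζ), hmem'⟩ = conj w := by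
    simp [hw, evalOne_apply, Complex.conj_tsum, coeff_sqrtOneSub]
  have hsq : w ^ 2 = 1 - ζ := by
    have h : (⟨sqrtOneSub ζ, hmem⟩ : wienerAlgebra ℂ) ^ 2 =
        1 - ⟨C ζ, C_mem_wienerAlgebra ζ⟩ * ⟨X, X_mem_wienerAlgebra⟩ :=
      Subtype.ext (sqrtOneSub_sq ζ)
    rw [hw, ← map_pow, h, map_sub, map_mul, map_one, evalOne_C, evalOne_X, mul_one]
  calc evalOne ℂ ⟨sqrtNormSq ζ, sqrtNormSq_mem_wienerAlgebra hζ⟩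
      = w * conj w := by rw [← hconj, hw, ← map_mul]; rfl
    _ = ‖1 - ζ‖ := by rw [Complex.mul_conj', ← Complex.ofReal_pow, ← norm_pow, hsq]

end SquareRoot

section WalkSupport

variable (a b s : ℝ)

lemma psi_succ_fst (t x : ℕ) :
    (psi a b s (t + 1) x).1 = a * (psi a b s t (x + 1)).1 - b * (psi a b s t (x + 1)).2 := by
  rw [psi]

lemma psi_succ_one_snd (t : ℕ) : (psi a b s (t + 1) 1).2 = s * (psi a b s t 0).1 := by
  simp [psi]

lemma psi_succ_add_two_snd (t x : ℕ) :
    (psi a b s (t + 1) (x + 2)).2 = b * (psi a b s t (x + 1)).1 + a * (psi a b s t (x + 1)).2 := by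
  simp [psi]

lemma psi_eq_zero_of_lt {t x : ℕ} (h : t < x) : psi a b s t x = 0 := by
  induction t generalizing x with
  | zero => simp [psi, h.ne']
  | succ t ih =>
    obtain ⟨x, rfl⟩ := Nat.exists_eq_add_of_le' (show 2 ≤ x by lia)
    simp [psi, ih (x := x + 3) (by lia), ih (x := x + 1) (by lia)]

lemma psi_eq_zero_of_odd {t x : ℕ} (h : Odd (t + x)) : psi a b s t x = 0 := by
  induction t generalizing x with
  | zero => simp [psi, show x ≠ 0 by grind]
  | succ t ih =>
    rcases x with _ | _ | x
    · simp [psi, ih (x := 1) (by grind)]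
    · simp [psi, ih (x := 2) (by grind), ih (x := 0) (by grind)]
    · simp [psi, ih (x := x + 3) (by grind), ih (x := x + 1) (by grind)]

end WalkSupport

section GeneratingFunctions

lemma eq_zero_of_isUnit_mul_eq_X_mul {R : Type*} [CommRing R] {f : ℕ → R⟦X⟧} {u c : R⟦X⟧}
    (hu : IsUnit u) (h : ∀ x, u * f x = X * (c * f (x + 1))) (x : ℕ) : f x = 0 := by
  have hdvd (n : ℕ) : ∀ x, X ^ n ∣ f x := by
    induction n with
    | zero => simp
    | succ n ih =>
      intro x
      rw [← hu.dvd_mul_left, h, pow_succ']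
      exact mul_dvd_mul_left X ((ih (x + 1)).mul_left c)
  ext n
  exact X_pow_dvd_iff.1 (hdvd (n + 1) x) n n.lt_succ_self

variable (a b s : ℝ)

/-- Generating function of the left amplitudes at `x`. By parity and finite speed they vanish
outside the times `2t + x`, so the variable counts double steps since the light cone
reached `x`. -/
def leftSeries (x : ℕ) : ℂ⟦X⟧ :=
  mk fun t => (psi a b s (2 * t + x) x).1

/-- Generating function of the right amplitudes at `x`, indexed as in `leftSeries`. -/
def rightSeries (x : ℕ) : ℂ⟦X⟧ :=
  mk fun t => (psi a b s (2 * t + x) x).2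

lemma leftSeries_zero :
    leftSeries a b s 0 =
      1 + X * (C (a : ℂ) * leftSeries a b s 1 - C (b : ℂ) * rightSeries a b s 1) := by
  ext t
  cases t with
  | zero => simp [leftSeries, psi]
  | succ t =>
    simp [leftSeries, rightSeries, coeff_succ_X_mul, coeff_one, mul_add, ← psi_succ_fst]

lemma leftSeries_succ (x : ℕ) :
    leftSeries a b s (x + 1) =
      X * (C (a : ℂ) * leftSeries a b s (x + 2) - C (b : ℂ) * rightSeries a b s (x + 2)) := by
  ext t
  cases t with
  | zero =>
    simp [leftSeries, psi_succ_fst, psi_eq_zero_of_lt]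
  | succ t =>
    have htime : 2 * (t + 1) + (x + 1) = 2 * t + (x + 2) + 1 := by ring
    simp [leftSeries, rightSeries, coeff_succ_X_mul, htime, psi_succ_fst]

lemma rightSeries_one : rightSeries a b s 1 = C (s : ℂ) * leftSeries a b s 0 := by
  ext t
  simp [leftSeries, rightSeries, psi_succ_one_snd]

lemma rightSeries_add_two (x : ℕ) :
    rightSeries a b s (x + 2) =
      C (b : ℂ) * leftSeries a b s (x + 1) + C (a : ℂ) * rightSeries a b s (x + 1) := by
  ext t
  simp [leftSeries, rightSeries, ← add_assoc, psi_succ_add_two_snd]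

end GeneratingFunctions

section ReflectionSeries

variable {a b : ℝ}

/-- The square root `√((1 - X)² + 4b²X)` governing the walk away from the wall; the discriminant
has the conjugate unit roots `(a ± ib)²`. -/
def discrimSqrt (a b : ℝ) : ℂ⟦X⟧ :=
  sqrtNormSq ((a + b * Complex.I) ^ 2)

lemma norm_add_mul_I_of_sq_add_sq (hab : a ^ 2 + b ^ 2 = 1) : ‖(a + b * Complex.I : ℂ)‖ = 1 := by
  rw [Complex.norm_add_mul_I, hab, Real.sqrt_one]

lemma norm_one_sub_sq_add_mul_I (hab : a ^ 2 + b ^ 2 = 1) :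
    ‖1 - (a + b * Complex.I : ℂ) ^ 2‖ = 2 * |b| := by
  have habC : (a : ℂ) ^ 2 + (b : ℂ) ^ 2 = 1 := mod_cast hab
  have hfactor : 1 - (a + b * Complex.I : ℂ) ^ 2 = -2 * b * Complex.I * (a + b * Complex.I) := by
    linear_combination b ^ 2 * Complex.I_sq - habC
  rw [hfactor, norm_mul, norm_add_mul_I_of_sq_add_sq hab]
  simp

lemma constantCoeff_discrimSqrt : constantCoeff (discrimSqrt a b) = 1 :=
  constantCoeff_sqrtNormSq _

lemma discrimSqrt_sq (hab : a ^ 2 + b ^ 2 = 1) :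
    discrimSqrt a b ^ 2 = (1 - X) ^ 2 + 4 * C (b : ℂ) ^ 2 * X := by
  have hnorm : (‖1 - (a + b * Complex.I : ℂ) ^ 2‖ ^ 2 : ℂ) = 4 * b ^ 2 := by
    rw [norm_one_sub_sq_add_mul_I hab, ← Complex.ofReal_pow, mul_pow, sq_abs]
    push_cast
    ring
  rw [discrimSqrt, sqrtNormSq_sq (by simp [norm_add_mul_I_of_sq_add_sq hab]), hnorm, map_mul,
    map_pow, map_ofNat]

lemma discrimSqrt_mem_wienerAlgebra (hab : a ^ 2 + b ^ 2 = 1) :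
    discrimSqrt a b ∈ wienerAlgebra ℂ :=
  sqrtNormSq_mem_wienerAlgebra (by simp [norm_add_mul_I_of_sq_add_sq hab])

lemma evalOne_discrimSqrt (hab : a ^ 2 + b ^ 2 = 1) :
    evalOne ℂ ⟨discrimSqrt a b, discrimSqrt_mem_wienerAlgebra hab⟩ = 2 * |b| := by
  have h := evalOne_sqrtNormSq (ζ := (a + b * Complex.I) ^ 2)
    (by simp [norm_add_mul_I_of_sq_add_sq hab])
  rw [norm_one_sub_sq_add_mul_I hab] at h
  exact_mod_cast h

/-- Generating function of the reflection by the bulk: with `h` this series, the left amplitude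
arriving at `x` comes from reflecting the right amplitude at `x + 1`. -/
def bulkReflection (a b : ℝ) : ℂ⟦X⟧ :=
  -2 * C (b : ℂ) * (1 - X + discrimSqrt a b)⁻¹

lemma bulkReflection_mul : bulkReflection a b * (1 - X + discrimSqrt a b) = -2 * C (b : ℂ) := by
  rw [bulkReflection, mul_assoc, PowerSeries.inv_mul_cancel, mul_one]
  simp [constantCoeff_discrimSqrt, one_add_one_eq_two]

lemma two_mul_C_mul_X_mul_bulkReflection (hab : a ^ 2 + b ^ 2 = 1) :
    2 * C (b : ℂ) * X * bulkReflection a b = 1 - X - discrimSqrt a b := by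
  have hne : 1 - X + discrimSqrt a b ≠ 0 := by
    refine ne_zero_of_map (f := constantCoeff) ?_
    simp [constantCoeff_discrimSqrt, one_add_one_eq_two]
  refine mul_right_cancel₀ hne ?_
  linear_combination 2 * C (b : ℂ) * X * bulkReflection_mul (a := a) (b := b) +
    discrimSqrt_sq hab

lemma bulkReflection_add_C (hab : a ^ 2 + b ^ 2 = 1) :
    bulkReflection a b + C (b : ℂ) =
      X * bulkReflection a b * (C (b : ℂ) * bulkReflection a b + 1) := by
  have htwo : (2 : ℂ⟦X⟧) ≠ 0 := ne_zero_of_map (f := constantCoeff) (by simp [map_ofNat])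
  refine mul_left_cancel₀ htwo ?_
  linear_combination bulkReflection_mul (a := a) (b := b) -
    bulkReflection a b * two_mul_C_mul_X_mul_bulkReflection hab

-- The defect of the identity at `x` is, up to a unit, `X` times the defect at `x + 1`.
lemma C_mul_leftSeries_sub_C_mul_rightSeries (hab : a ^ 2 + b ^ 2 = 1) (s : ℝ) (x : ℕ) :
    C (a : ℂ) * leftSeries a b s (x + 1) - C (b : ℂ) * rightSeries a b s (x + 1) =
      bulkReflection a b * rightSeries a b s (x + 1) := by
  have habC : C (a : ℂ) ^ 2 + C (b : ℂ) ^ 2 = 1 := by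
    simp only [← map_pow, ← map_add, ← map_one C]
    exact_mod_cast congrArg (fun r : ℝ => C (r : ℂ)) hab
  set h := bulkReflection a b
  have hu : IsUnit (1 - X * (C (b : ℂ) * h)) := by
    rw [isUnit_iff_constantCoeff]
    simp
  refine sub_eq_zero.1 (eq_zero_of_isUnit_mul_eq_X_mul (c := C (a : ℂ)) (f := fun x =>
    C (a : ℂ) * leftSeries a b s (x + 1) - C (b : ℂ) * rightSeries a b s (x + 1) -
      h * rightSeries a b s (x + 1)) hu (fun x => ?_) x)
  have hL := leftSeries_succ a b s x
  have hR := rightSeries_add_two a b s x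
  linear_combination C (a : ℂ) * hL + (C (a : ℂ) * X * h) * hR -
    rightSeries a b s (x + 1) * bulkReflection_add_C hab +
    (X * h * rightSeries a b s (x + 1)) * habC

lemma leftSeries_zero_mul (hab : a ^ 2 + b ^ 2 = 1) (s : ℝ) :
    leftSeries a b s 0 * (1 - C (s : ℂ) * X * bulkReflection a b) = 1 := by
  have h₀ := leftSeries_zero a b s
  rw [C_mul_leftSeries_sub_C_mul_rightSeries hab, rightSeries_one] at h₀
  linear_combination h₀

-- For `s = -1` the wall resonates with the bulk: the pole at `1` is explicit.
lemma one_sub_X_mul_leftSeries_zero (hab : a ^ 2 + b ^ 2 = 1) :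
    2 * (1 + C (b : ℂ)) * ((1 - X) * leftSeries a b (-1) 0) =
      2 * C (b : ℂ) + 1 - X + discrimSqrt a b := by
  have hF := leftSeries_zero_mul hab (-1)
  simp only [Complex.ofReal_neg, Complex.ofReal_one, map_neg, map_one] at hF
  linear_combination (2 * C (b : ℂ) + 1 - X + discrimSqrt a b) * hF -
    leftSeries a b (-1) 0 * (two_mul_C_mul_X_mul_bulkReflection hab +
      X * bulkReflection_mul (a := a) (b := b))

end ReflectionSeries

section Localization

variable {a b : ℝ}

lemma tendsto_psi_zero_fst (hab : a ^ 2 + b ^ 2 = 1) (hb : 1 + b ≠ 0) :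
    Tendsto (fun t : ℕ => (psi a b (-1) (2 * t) 0).1) atTop
      (𝓝 ((b + |b|) / (1 + b) : ℝ)) := by
  have hbC : (1 + b : ℂ) ≠ 0 := mod_cast hb
  let g : wienerAlgebra ℂ := (2 * (1 + b : ℂ))⁻¹ • (2 * ⟨C (b : ℂ), C_mem_wienerAlgebra _⟩ + 1 -
    ⟨X, X_mem_wienerAlgebra⟩ + ⟨discrimSqrt a b, discrimSqrt_mem_wienerAlgebra hab⟩)
  have hg : (1 - X) * leftSeries a b (-1) 0 = (g : ℂ⟦X⟧) := by
    have h : (2 * (1 + b : ℂ)) • ((1 - X) * leftSeries a b (-1) 0) =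
        2 * C (b : ℂ) + 1 - X + discrimSqrt a b := by
      rw [← one_sub_X_mul_leftSeries_zero hab, smul_eq_C_mul]
      simp [map_ofNat]
    exact (eq_inv_smul_iff₀ (mul_ne_zero two_ne_zero hbC)).2 h
  have heval : evalOne ℂ g = ((b + |b|) / (1 + b) : ℝ) := by
    simp only [g, map_smul, map_add, map_sub, map_mul, map_one, map_ofNat, evalOne_C, evalOne_X,
      evalOne_discrimSqrt hab, smul_eq_mul, add_sub_cancel_right]
    push_cast
    field_simp
  rw [← heval]
  exact (tendsto_coeff_of_one_sub_X_mul_eq hg).congr fun t => by simp [leftSeries]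

lemma tendsto_psi_succ_fst (ha : a ≠ 0) {s : ℝ} {x : ℕ} {l r : ℂ}
    (hl : Tendsto (fun t : ℕ => (psi a b s (2 * t + x) x).1) atTop (𝓝 l))
    (hr : Tendsto (fun t : ℕ => (psi a b s (2 * t + (x + 1)) (x + 1)).2) atTop (𝓝 r)) :
    Tendsto (fun t : ℕ => (psi a b s (2 * t + (x + 1)) (x + 1)).1) atTop
      (𝓝 ((l + b * r) / a)) := by
  have haC : (a : ℂ) ≠ 0 := mod_cast ha
  refine (((hl.comp (tendsto_add_atTop_nat 1)).add (hr.const_mul (b : ℂ))).div_const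
    (a : ℂ)).congr fun t => ?_
  have htime : 2 * (t + 1) + x = 2 * t + (x + 1) + 1 := by ring
  rw [Function.comp_apply, htime, psi_succ_fst, sub_add_cancel, mul_div_cancel_left₀ _ haC]

lemma tendsto_psi_add_two_snd {s : ℝ} {x : ℕ} {l r : ℂ}
    (hl : Tendsto (fun t : ℕ => (psi a b s (2 * t + (x + 1)) (x + 1)).1) atTop (𝓝 l))
    (hr : Tendsto (fun t : ℕ => (psi a b s (2 * t + (x + 1)) (x + 1)).2) atTop (𝓝 r)) :
    Tendsto (fun t : ℕ => (psi a b s (2 * t + (x + 2)) (x + 2)).2) atTop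
      (𝓝 (b * l + a * r)) :=
  ((hl.const_mul (b : ℂ)).add (hr.const_mul (a : ℂ))).congr fun t =>
    (psi_succ_add_two_snd a b s (2 * t + (x + 1)) x).symm

lemma tendsto_psi_succ (hab : a ^ 2 + b ^ 2 = 1) (ha : a ≠ 0) (x : ℕ) :
    Tendsto (fun t : ℕ => (psi a b (-1) (2 * t + (x + 1)) (x + 1)).1) atTop
      (𝓝 ((b + |b|) / (1 + b) * ((1 - b) / a) ^ (x + 1) : ℝ)) ∧
    Tendsto (fun t : ℕ => (psi a b (-1) (2 * t + (x + 1)) (x + 1)).2) atTop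
      (𝓝 (-((b + |b|) / (1 + b) * ((1 - b) / a) ^ x) : ℝ)) := by
  have hb : 1 + b ≠ 0 := by
    rintro h
    exact ha (pow_eq_zero_iff two_ne_zero |>.1 (by linear_combination hab + (1 - b) * h))
  have hzero := tendsto_psi_zero_fst hab hb
  set c := (b + |b|) / (1 + b)
  set q := (1 - b) / a with hq
  have hqR : a - b * q = q := by
    rw [hq]
    field_simp
    linear_combination hab
  induction x with
  | zero =>
    have hR : Tendsto (fun t : ℕ => (psi a b (-1) (2 * t + (0 + 1)) (0 + 1)).2) atTop
        (𝓝 (-(c * q ^ 0) : ℝ)) := by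
      simpa [psi_succ_one_snd] using hzero.neg
    refine ⟨?_, hR⟩
    convert tendsto_psi_succ_fst ha hzero hR using 2
    norm_cast
    rw [hq]
    ring
  | succ x ih =>
    obtain ⟨ihL, ihR⟩ := ih
    have hR : Tendsto (fun t : ℕ => (psi a b (-1) (2 * t + (x + 2)) (x + 2)).2) atTop
        (𝓝 (-(c * q ^ (x + 1)) : ℝ)) := by
      convert tendsto_psi_add_two_snd ihL ihR using 2
      norm_cast
      linear_combination c * q ^ x * hqR
    refine ⟨?_, hR⟩
    convert tendsto_psi_succ_fst ha ihL hR using 2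
    norm_cast
    rw [hq]
    ring

lemma tendsto_prob_succ (hab : a ^ 2 + b ^ 2 = 1) (ha : a ≠ 0) (x : ℕ) :
    Tendsto (fun t : ℕ => prob a b (-1) (2 * t + (x + 1)) (x + 1)) atTop
      (𝓝 (2 / (1 - b) * ((b + |b|) / (1 + b)) ^ 2 * ((1 - b) / (1 + b)) ^ (x + 1))) := by
  have hprod : (1 - b) * (1 + b) = a ^ 2 := by linear_combination -hab
  obtain ⟨hb, hb'⟩ := mul_ne_zero_iff.1 (hprod ▸ pow_ne_zero 2 ha)
  have hratio : ((1 - b) / a) ^ 2 = (1 - b) / (1 + b) := by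
    rw [div_pow, ← hprod]
    field_simp
  have hsites : 2 / (1 - b) * ((1 - b) / (1 + b)) = (1 - b) / (1 + b) + 1 := by
    field_simp
    ring
  obtain ⟨hL, hR⟩ := tendsto_psi_succ hab ha x
  convert (hL.norm.pow 2).add (hR.norm.pow 2) using 2
  · rfl
  · simp only [Complex.norm_real, Real.norm_eq_abs, sq_abs, neg_sq, mul_pow,
      pow_right_comm _ _ 2, hratio]
    linear_combination ((b + |b|) / (1 + b)) ^ 2 * ((1 - b) / (1 + b)) ^ x * hsites

end Localization

theorem half_line_caseB_odd_time_localization_general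
    {κ a b : ℝ} (hκ : 2 ≤ κ) (ha : a = 2 * Real.sqrt (κ - 1) / κ) (hb : b = (κ - 2) / κ) (x : ℕ) :
    Tendsto (fun t : ℕ => prob a b (-1) (2 * t + 1) x) atTop
      (𝓝 (if Odd x then κ * ((κ - 2) / (κ - 1)) ^ 2 * (1 / (κ - 1)) ^ x else 0)) := by
  have hκ₁ : 0 < κ - 1 := by linarith
  have hab : a ^ 2 + b ^ 2 = 1 := by
    rw [ha, hb, div_pow, mul_pow, Real.sq_sqrt hκ₁.le]
    field_simp
    ring
  have ha₀ : a ≠ 0 := by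
    rw [ha]
    positivity
  have hb₀ : 0 ≤ b := hb ▸ div_nonneg (by linarith) (by linarith)
  have hsub : 1 - b = 2 / κ := by rw [hb]; field_simp; ring
  have hadd : 1 + b = 2 * (κ - 1) / κ := by rw [hb]; field_simp; ring
  split_ifs with hx
  · obtain ⟨m, rfl⟩ := hx
    rw [← tendsto_add_atTop_iff_nat m]
    convert tendsto_prob_succ hab ha₀ (2 * m) using 2 with t
    · congr 1; ring
    · rw [abs_of_nonneg hb₀, hsub, hadd, hb]
      congr 2 <;> field_simp
      ring
  · refine tendsto_const_nhds.congr fun t => ?_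
    have hodd : Odd (2 * t + 1 + x) := by grind
    simp [prob, psi_eq_zero_of_odd a b (-1) hodd]

/-- In Case (B) (`s = −1`), for every `x ∈ ℤ₊` the limit
`P_*^{(O)}(x) = lim_{t→∞} P(X_{2t+1} = x)` exists and equals
`κ·((κ−2)/(κ−1))²·(1/(κ−1))^x` for odd `x` and `0` for even `x`. -/
theorem half_line_caseB_odd_time_localization
    (κ : ℕ) (hκ : 3 ≤ κ) (a b : ℝ)
    (ha : a = 2 * Real.sqrt ((κ : ℝ) - 1) / κ) (hb : b = ((κ : ℝ) - 2) / κ)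
    (x : ℕ) :
    Tendsto (fun t : ℕ => prob a b (-1) (2 * t + 1) x) atTop
      (𝓝 (if Odd x then
          (κ : ℝ) * (((κ : ℝ) - 2) / ((κ : ℝ) - 1)) ^ 2 * (1 / ((κ : ℝ) - 1)) ^ x
        else 0)) :=
  half_line_caseB_odd_time_localization_general (by exact_mod_cast (by lia : 2 ≤ κ)) ha hb x

end
end
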